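/- Let μ be a finitely additive, nonnegative function defined on cylinder sets of a countable product of countable sets, with μ of the whole space equal to 1, such that μ is countably additive on each coordinate (the measures of the cylinders {π_V^{-1}(v) : v ∈ Val(V)} sum to 1 for each coordinate V). Then μ extends uniquely to a probability measure on the product σ-algebra. -/

import Mathlib

/-!
The sets constrained on finitely many coordinates, one coordinate at a time (boxes, together with
`∅`), form a semiring of sets generating the product σ-algebra, so by Carathéodory's theorem it is
enough to see that `μ` is a finitely additive, σ-subadditive content on this semiring; uniqueness is
the π-λ theorem.

The hypothesis on a single coordinate `i` says that the mass of `{ω | ω i ∉ F}` tends to `0` along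
the finite sets `F`. Two things follow.

* *Finite additivity* (`RectContent.sum_eq`). The hypothesis only gives additivity for two boxes
  whose union is a box. Since `μ A = ∑' v, μ (A ∩ {ω | ω i = v})` (`RectContent.tsum_slice`), an
  arbitrary finite partition of a box into boxes can be sliced along one coordinate after another,
  until no constrained coordinate is left and every piece is trivial.
* *σ-subadditivity* (`RectContent.sigmaSubadditive`). Choose finite `K i` such that the masses of
  `{ω | ω i ∉ K i}` have sum less than `ε`. For the product of the discrete topologies boxes are
  clopen and `∏ K i` is compact, so a countable cover of a box `A` has a finite subcover on
  `A ∩ ∏ K i`. As only finitely many coordinates are involved, that finite subcover together with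
  finitely many of the sets `{ω | ω i ∉ K i}` covers `A`.
-/

open MeasureTheory
open scoped ENNReal

/-- A cylinder set in a product of countable sets: a set constrained on finitely many
coordinates (and equal to the full range elsewhere). -/
def IsCylinder {I : Type} {Val : I → Set ℕ+} (A : Set (∀ i, Val i)) : Prop :=
  ∃ (s : Finset I) (S : ∀ i, Set (Val i)), A = {ω | ∀ i ∈ s, ω i ∈ S i}

open Set Filter Topology

section Rectangles

variable {I : Type} {X : I → Type}

/-- The set of points whose `i`-th coordinate lies in `S i` for each `i ∈ s`. -/
def box (s : Finset I) (S : ∀ i, Set (X i)) : Set (∀ i, X i) := {ω | ∀ i ∈ s, ω i ∈ S i}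

/-- Boxes together with the empty set. The latter is listed separately because it is not a box
when `I` is empty. -/
def rects (X : I → Type) : Set (Set (∀ i, X i)) := {A | A = ∅ ∨ ∃ s S, A = box s S}

/-- Membership in `A` depends only on the coordinates in `t`. -/
def SupportedOn (A : Set (∀ i, X i)) (t : Finset I) : Prop :=
  ∀ ω ω' : ∀ i, X i, (∀ i ∈ t, ω i = ω' i) → ω ∈ A → ω' ∈ A

/-- A normalized set function on boxes, additive for two disjoint boxes whose union is a box, and
countably additive in each coordinate. -/
structure RectContent (m : Set (∀ i, X i) → ℝ≥0∞) : Prop where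
  map_empty : m ∅ = 0
  map_univ : m univ = 1
  map_union : ∀ A ∈ rects X, ∀ B ∈ rects X, A ∪ B ∈ rects X → Disjoint A B → m (A ∪ B) = m A + m B
  coord : ∀ i : I, ∑' v : X i, m {ω | ω i = v} = 1

lemma SupportedOn.mono {A : Set (∀ i, X i)} {s t : Finset I} (h : SupportedOn A s) (hst : s ⊆ t) :
    SupportedOn A t := fun ω ω' hω => h ω ω' fun i hi => hω i (hst hi)

lemma empty_mem_rects : (∅ : Set (∀ i, X i)) ∈ rects X := Or.inl rfl

lemma box_mem_rects (s : Finset I) (S : ∀ i, Set (X i)) : box s S ∈ rects X := Or.inr ⟨s, S, rfl⟩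

lemma univ_mem_rects : (univ : Set (∀ i, X i)) ∈ rects X :=
  Or.inr ⟨∅, fun _ => univ, by simp [box]⟩

lemma slice_mem_rects (i : I) (T : Set (X i)) : {ω : ∀ i, X i | ω i ∈ T} ∈ rects X := by
  classical
  refine Or.inr ⟨{i}, fun j => {x | ∀ h : j = i, h ▸ x ∈ T}, ?_⟩
  ext ω
  constructor
  · intro h j hj hji
    subst hji
    exact h
  · intro h
    exact h i (Finset.mem_singleton_self i) rfl

lemma inter_mem_rects {A B : Set (∀ i, X i)} (hA : A ∈ rects X) (hB : B ∈ rects X) :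
    A ∩ B ∈ rects X := by
  classical
  rcases hA with rfl | ⟨s, S, rfl⟩
  · simp [empty_mem_rects]
  rcases hB with rfl | ⟨t, T, rfl⟩
  · simp [empty_mem_rects]
  refine Or.inr ⟨s ∪ t, fun i => {x | (i ∈ s → x ∈ S i) ∧ (i ∈ t → x ∈ T i)}, ?_⟩
  ext ω
  simp only [box, mem_inter_iff, mem_ofPred_eq, Finset.mem_union]
  grind

lemma exists_supportedOn {A : Set (∀ i, X i)} (hA : A ∈ rects X) : ∃ t, SupportedOn A t := by
  rcases hA with rfl | ⟨s, S, rfl⟩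
  · exact ⟨∅, fun _ _ _ h => h⟩
  · refine ⟨s, fun ω ω' h hω i hi => ?_⟩
    rw [← h i hi]
    exact hω i hi

lemma box_insert [DecidableEq I] (i : I) (t : Finset I) (S : ∀ i, Set (X i)) :
    box (insert i t) S = {ω | ω i ∈ S i} ∩ box t S := by
  ext ω
  simp [box]

/-- Fixing the `i`-th coordinate to be `v` turns a box into a box or the empty set. -/
lemma section_mem_rects [DecidableEq I] {A : Set (∀ i, X i)} (hA : A ∈ rects X) (i : I) (v : X i) :
    {ω | Function.update ω i v ∈ A} ∈ rects X := by
  rcases hA with rfl | ⟨s, S, rfl⟩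
  · simp [empty_mem_rects]
  by_cases h : i ∈ s ∧ v ∉ S i
  · left
    ext ω
    simp only [box, mem_ofPred_eq, mem_empty_iff_false, iff_false]
    intro hω
    exact h.2 (by simpa using hω i h.1)
  · right
    refine ⟨s.erase i, S, ?_⟩
    ext ω
    simp only [box, mem_ofPred_eq, Finset.mem_erase]
    constructor
    · intro hω j hj
      simpa [Function.update_of_ne hj.1] using hω j hj.2
    · intro hω j hj
      by_cases hji : j = i
      · subst hji
        simp only [Function.update_self]
        by_contra hv
        exact h ⟨hj, hv⟩
      · simpa [Function.update_of_ne hji] using hω j ⟨hji, hj⟩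

lemma SupportedOn.fix_coord [DecidableEq I] {A : Set (∀ i, X i)} {i : I} {t : Finset I}
    (h : SupportedOn A (insert i t)) (v : X i) :
    SupportedOn {ω | Function.update ω i v ∈ A} t := by
  intro ω ω' hω
  refine h _ _ fun j hj => ?_
  by_cases hji : j = i
  · subst hji; simp
  · simp [Function.update_of_ne hji, hω j (Finset.mem_of_mem_insert_of_ne hj hji)]

lemma isSetSemiring_rects : IsSetSemiring (rects X) where
  empty_mem := empty_mem_rects
  inter_mem _ hA _ hB := inter_mem_rects hA hB
  sdiff_eq_sUnion' := by
    classical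
    intro A hA B hB
    rcases hB with rfl | ⟨s, S, rfl⟩
    · exact ⟨{A}, by simpa using hA, by simp, by simp⟩
    induction s using Finset.induction_on generalizing A with
    | empty => exact ⟨∅, by simp, by simp, by simp [box]⟩
    | insert i t hi ih =>
      -- `A \ box (insert i t) S` is `A ∩ {ω | ω i ∉ S i}` and `(A ∩ {ω | ω i ∈ S i}) \ box t S`.
      obtain ⟨J, hJ, hJd, hJU⟩ := ih (A ∩ {ω | ω i ∈ S i}) (inter_mem_rects hA (slice_mem_rects i _))
      refine ⟨insert (A ∩ {ω | ω i ∈ (S i)ᶜ}) J, ?_, ?_, ?_⟩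
      · rw [Finset.coe_insert]
        exact insert_subset (inter_mem_rects hA (slice_mem_rects i _)) hJ
      · rw [Finset.coe_insert]
        refine hJd.insert fun D hD _ => ?_
        have hsub : D ⊆ A ∩ {ω | ω i ∈ S i} :=
          (subset_sUnion_of_mem hD).trans (hJU ▸ sdiff_subset)
        exact Set.disjoint_left.2 fun ω h1 h2 => h1.2 (hsub h2).2
      · rw [Finset.coe_insert, sUnion_insert, ← hJU, box_insert]
        ext ω
        simp only [Set.mem_sdiff, mem_inter_iff, mem_union, mem_ofPred_eq, mem_compl_iff]
        tauto

namespace RectContent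

variable {m : Set (∀ i, X i) → ℝ≥0∞}

lemma split (hm : RectContent m) {A : Set (∀ i, X i)} (hA : A ∈ rects X) (i : I) (T : Set (X i)) :
    m A = m (A ∩ {ω | ω i ∈ T}) + m (A ∩ {ω | ω i ∈ Tᶜ}) := by
  have h : A ∩ {ω | ω i ∈ T} ∪ A ∩ {ω | ω i ∈ Tᶜ} = A := by
    ext ω
    simp only [mem_union, mem_inter_iff, mem_ofPred_eq, mem_compl_iff]
    tauto
  rw [← hm.map_union _ (inter_mem_rects hA (slice_mem_rects i T)) _
    (inter_mem_rects hA (slice_mem_rects i Tᶜ)) (h.symm ▸ hA), h]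
  exact Set.disjoint_left.2 fun ω h1 h2 => h2.2 h1.2

lemma inter_le (hm : RectContent m) {A B : Set (∀ i, X i)} (hA : A ∈ rects X) (hB : B ∈ rects X) :
    m (A ∩ B) ≤ m A := by
  classical
  rcases hB with rfl | ⟨s, S, rfl⟩
  · simp [hm.map_empty]
  induction s using Finset.induction_on generalizing A with
  | empty => simp [box]
  | insert i t hi ih =>
    rw [box_insert, ← inter_assoc]
    refine (ih (inter_mem_rects hA (slice_mem_rects i _))).trans ?_
    rw [hm.split hA i (S i)]
    exact le_self_add

lemma sum_slice (hm : RectContent m) {A : Set (∀ i, X i)} (hA : A ∈ rects X) (i : I)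
    (F : Finset (X i)) : ∑ v ∈ F, m (A ∩ {ω | ω i = v}) = m (A ∩ {ω | ω i ∈ F}) := by
  classical
  induction F using Finset.induction_on with
  | empty => simp [hm.map_empty]
  | insert v F hv ih =>
    rw [Finset.sum_insert hv, ih,
      hm.split (A := A ∩ {ω | ω i ∈ insert v F})
        (inter_mem_rects hA (slice_mem_rects i {x | x ∈ insert v F})) i {v}]
    congr 2 <;> ext ω <;> simp <;> grind

/-- Countable additivity in the `i`-th coordinate, expressed by tails. -/
lemma tendsto_tail (hm : RectContent m) (i : I) :
    Tendsto (fun F : Finset (X i) => m {ω | ω i ∈ (F : Set (X i))ᶜ}) atTop (𝓝 0) := by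
  have h1 : Tendsto (fun F : Finset (X i) => ∑ v ∈ F, m {ω | ω i = v}) atTop (𝓝 1) := by
    rw [← hm.coord i]
    exact ENNReal.summable.hasSum
  have h2 := ENNReal.Tendsto.sub (tendsto_const_nhds (x := (1 : ℝ≥0∞))) h1 (Or.inl (by simp))
  rw [tsub_self] at h2
  refine h2.congr fun F => ?_
  have h3 := hm.split univ_mem_rects i (F : Set (X i))
  have h4 := hm.sum_slice univ_mem_rects i F
  simp only [univ_inter, hm.map_univ] at h3 h4
  rw [h4, h3]
  refine ENNReal.add_sub_cancel_left (ne_top_of_le_ne_top ENNReal.one_ne_top ?_)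
  rw [h3]
  exact le_self_add

/-- Every box, not only the whole space, is countably additive along the `i`-th coordinate. -/
lemma tsum_slice (hm : RectContent m) {A : Set (∀ i, X i)} (hA : A ∈ rects X) (i : I) :
    m A = ∑' v, m (A ∩ {ω | ω i = v}) := by
  have h1 : Tendsto (fun F : Finset (X i) => m (A ∩ {ω | ω i ∈ (F : Set (X i))ᶜ})) atTop (𝓝 0) := by
    refine tendsto_of_tendsto_of_tendsto_of_le_of_le tendsto_const_nhds (hm.tendsto_tail i)
      (fun _ => zero_le) fun F => ?_
    rw [inter_comm]
    exact hm.inter_le (slice_mem_rects i _) hA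
  have h2 : Tendsto (fun F : Finset (X i) => ∑ v ∈ F, m (A ∩ {ω | ω i = v})) atTop
      (𝓝 (∑' v, m (A ∩ {ω | ω i = v}))) := ENNReal.summable.hasSum
  have h3 := h2.add h1
  rw [add_zero] at h3
  refine tendsto_nhds_unique (tendsto_const_nhds.congr fun F => ?_) h3
  rw [hm.sum_slice hA i F]
  exact hm.split hA i (F : Set (X i))

/-- Finite additivity for arbitrary finite partitions of a box into boxes. The extra box `C`
records the slices already taken in the induction on the set `t` of constrained coordinates. -/
lemma sum_eq (hm : RectContent m) {κ : Type*} (J : Finset κ) (t : Finset I) :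
    ∀ (C B : Set (∀ i, X i)) (D : κ → Set (∀ i, X i)), C ∈ rects X → B ∈ rects X →
      (∀ k ∈ J, D k ∈ rects X) → SupportedOn B t → (∀ k ∈ J, SupportedOn (D k) t) →
      (∀ k ∈ J, ∀ l ∈ J, k ≠ l → Disjoint (D k) (D l)) → B = ⋃ k ∈ J, D k →
      m (C ∩ B) = ∑ k ∈ J, m (C ∩ D k) := by
  classical
  induction t using Finset.induction_on with
  | empty =>
    intro C B D hC hB hD hBs hDs hdisj hU
    -- A set supported on no coordinate is `∅` or everything.
    rcases B.eq_empty_or_nonempty with rfl | ⟨ω, hω⟩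
    · have : ∀ k ∈ J, D k = ∅ := fun k hk =>
        eq_empty_of_subset_empty (hU ▸ subset_biUnion_of_mem (u := D) (Finset.mem_coe.2 hk))
      rw [Finset.sum_eq_zero fun k hk => by rw [this k hk, inter_empty, hm.map_empty], inter_empty,
        hm.map_empty]
    · rw [hU] at hω
      obtain ⟨k, hk, hωk⟩ := mem_iUnion₂.1 hω
      have hDk : D k = univ := eq_univ_of_forall fun ω' => hDs k hk ω ω' (by simp) hωk
      have hBu : B = univ :=
        eq_univ_of_univ_subset (hU ▸ hDk ▸ subset_biUnion_of_mem (u := D) (Finset.mem_coe.2 hk))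
      rw [Finset.sum_eq_single_of_mem k hk, hDk, hBu]
      intro l hl hlk
      have := hdisj l hl k hk hlk
      rw [hDk, disjoint_univ] at this
      rw [this, inter_empty, hm.map_empty]
  | insert i t hi ih =>
    intro C B D hC hB hD hBs hDs hdisj hU
    have key : ∀ E : Set (∀ i, X i), ∀ v : X i, (C ∩ E) ∩ {ω | ω i = v} =
        (C ∩ {ω | ω i = v}) ∩ {ω | Function.update ω i v ∈ E} := by
      intro E v
      ext ω
      simp only [mem_inter_iff, mem_ofPred_eq]
      constructor
      · rintro ⟨⟨h1, h2⟩, rfl⟩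
        exact ⟨⟨h1, rfl⟩, by simpa using h2⟩
      · rintro ⟨⟨h1, rfl⟩, h2⟩
        exact ⟨⟨h1, by simpa using h2⟩, rfl⟩
    rw [hm.tsum_slice (inter_mem_rects hC hB) i]
    rw [Finset.sum_congr rfl fun k hk => hm.tsum_slice (inter_mem_rects hC (hD k hk)) i,
      ← Summable.tsum_finsetSum fun k _ => ENNReal.summable]
    refine tsum_congr fun v => ?_
    simp only [key]
    refine ih _ _ (fun k => {ω | Function.update ω i v ∈ D k})
      (inter_mem_rects hC (slice_mem_rects i {v})) (section_mem_rects hB i v)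
      (fun k hk => section_mem_rects (hD k hk) i v) (hBs.fix_coord v)
      (fun k hk => (hDs k hk).fix_coord v) (fun k hk l hl hkl => ?_) ?_
    · exact (hdisj k hk l hl hkl).preimage _
    · ext ω
      simp [hU]

/-- The content on the semiring of boxes given by `m`. -/
noncomputable def content (hm : RectContent m) : AddContent ℝ≥0∞ (rects X) where
  toFun := m
  empty' := hm.map_empty
  sUnion' := by
    classical
    intro J hJ hd hU
    have hs : ∀ A : Set (∀ i, X i), ∃ t, A ∈ rects X → SupportedOn A t := fun A => by
      by_cases hA : A ∈ rects X
      · exact (exists_supportedOn hA).imp fun t ht _ => ht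
      · exact ⟨∅, fun h => absurd h hA⟩
    choose t ht using hs
    have := hm.sum_eq J (t (⋃₀ ↑J) ∪ J.biUnion t) univ (⋃₀ ↑J) id univ_mem_rects hU
      (fun A hA => hJ hA) ((ht _ hU).mono Finset.subset_union_left)
      (fun A hA => (ht _ (hJ hA)).mono
        ((Finset.subset_biUnion_of_mem t hA).trans Finset.subset_union_right))
      (fun A hA B hB hAB => hd hA hB hAB) (by simp [sUnion_eq_biUnion])
    simpa using this

lemma le_sum (hm : RectContent m) {κ : Type*} (J : Finset κ) {A : Set (∀ i, X i)}
    {D : κ → Set (∀ i, X i)} (hA : A ∈ rects X) (hD : ∀ k, D k ∈ rects X)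
    (hAD : A ⊆ ⋃ k ∈ J, D k) : m A ≤ ∑ k ∈ J, m (D k) := by
  classical
  have h := addContent_le_sum_of_subset_sUnion (m := hm.content) isSetSemiring_rects
    (J := J.image D) (by intro B hB; simp at hB; obtain ⟨k, -, rfl⟩ := hB; exact hD k) hA
    (by simpa using hAD)
  exact h.trans (Finset.sum_image_le_of_nonneg fun _ _ => zero_le)

lemma isClopen_of_mem_rects [∀ i, TopologicalSpace (X i)] [∀ i, DiscreteTopology (X i)]
    {A : Set (∀ i, X i)} (hA : A ∈ rects X) : IsClopen A := by
  rcases hA with rfl | ⟨s, S, rfl⟩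
  · exact isClopen_empty
  · have : box s S = ⋂ i ∈ s, (fun ω : ∀ i, X i => ω i) ⁻¹' S i := by ext; simp [box]
    rw [this]
    exact s.finite_toSet.isClopen_biInter fun i _ =>
      (isClopen_discrete (S i)).preimage (continuous_apply i)

lemma sigmaSubadditive [Countable I] [∀ i, Nonempty (X i)] (hm : RectContent m) :
    hm.content.IsSigmaSubadditive := by
  classical
  intro f hf hA
  change m (⋃ n, f n) ≤ ∑' n, m (f n)
  set A := ⋃ n, f n with hAdef
  refine ENNReal.le_of_forall_pos_le_add fun ε hε _ => ?_
  obtain ⟨δ, hδ, hδε⟩ := ENNReal.exists_pos_sum_of_countable' (ENNReal.coe_pos.2 hε).ne' I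
  have hK : ∀ i, ∃ F : Finset (X i), F.Nonempty ∧ m {ω | ω i ∈ (F : Set (X i))ᶜ} < δ i := fun i => by
    obtain ⟨F, hF1, hF2⟩ := (((hm.tendsto_tail i).eventually_lt_const (hδ i)).and
      (eventually_ge_atTop {Classical.arbitrary (X i)})).exists
    exact ⟨F, ⟨_, Finset.singleton_subset_iff.1 hF2⟩, hF1⟩
  choose K hKne hKδ using hK
  choose p hp using hKne
  let _ : ∀ i, TopologicalSpace (X i) := fun _ => ⊥
  have : ∀ i, DiscreteTopology (X i) := fun _ => ⟨rfl⟩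
  have hcomp : IsCompact (A ∩ Set.pi univ fun i => (K i : Set (X i))) :=
    (isCompact_univ_pi fun i => (K i).finite_toSet.isCompact).inter_left
      (isClopen_of_mem_rects hA).isClosed
  obtain ⟨T, hT⟩ := hcomp.elim_finite_subcover f (fun n => (isClopen_of_mem_rects (hf n)).isOpen)
    inter_subset_left
  obtain ⟨s₀, hs₀⟩ := exists_supportedOn hA
  choose u hu using fun n => exists_supportedOn (hf n)
  set s := s₀ ∪ T.biUnion u with hs
  have hcover : A ⊆ ⋃ k ∈ T.disjSum s,
      Sum.elim f (fun i => {ω : ∀ i, X i | ω i ∈ (K i : Set (X i))ᶜ}) k := by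
    intro ω hω
    by_cases hbad : ∃ i ∈ s, ω i ∉ K i
    · obtain ⟨i, hi, hiK⟩ := hbad
      exact mem_iUnion₂.2 ⟨Sum.inr i, Finset.inr_mem_disjSum.2 hi, by simpa using hiK⟩
    · push Not at hbad
      -- Move `ω` into the compact set without changing the coordinates that matter.
      let ω' : ∀ i, X i := fun i => if i ∈ s then ω i else p i
      have hω' : ∀ i ∈ s, ω i = ω' i := fun i hi => by simp [ω', hi]
      have hA' : ω' ∈ A := hs₀.mono Finset.subset_union_left ω ω' hω' hω
      have hK' : ω' ∈ Set.pi univ fun i => (K i : Set (X i)) := fun i _ => by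
        by_cases hi : i ∈ s
        · simpa [ω', hi] using hbad i hi
        · simpa [ω', hi] using hp i
      obtain ⟨n, hn, hωn⟩ := mem_iUnion₂.1 (hT ⟨hA', hK'⟩)
      refine mem_iUnion₂.2 ⟨Sum.inl n, Finset.inl_mem_disjSum.2 hn, ?_⟩
      exact (hu n).mono ((Finset.subset_biUnion_of_mem u hn).trans Finset.subset_union_right)
        ω' ω (fun i hi => (hω' i hi).symm) hωn
  have h := hm.le_sum (T.disjSum s) hA (by
    rintro (n | i)
    · exact hf n
    · exact slice_mem_rects i _) hcover
  rw [Finset.sum_disjSum] at h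
  refine h.trans (add_le_add (ENNReal.sum_le_tsum T) ?_)
  calc ∑ i ∈ s, m {ω | ω i ∈ (K i : Set (X i))ᶜ} ≤ ∑ i ∈ s, δ i :=
        Finset.sum_le_sum fun i _ => (hKδ i).le
    _ ≤ ∑' i, δ i := ENNReal.sum_le_tsum s
    _ ≤ ε := hδε.le

end RectContent

lemma pi_eq_generateFrom_rects :
    @MeasurableSpace.pi I X (fun _ => ⊤) = MeasurableSpace.generateFrom (rects X) := by
  let _ : ∀ i, MeasurableSpace (X i) := fun _ => ⊤
  apply le_antisymm
  · refine iSup_le fun i => ?_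
    rintro _ ⟨T, -, rfl⟩
    exact MeasurableSpace.measurableSet_generateFrom (slice_mem_rects i T)
  · refine MeasurableSpace.generateFrom_le fun A hA => ?_
    rcases hA with rfl | ⟨s, S, rfl⟩
    · exact MeasurableSet.empty
    · have : box s S = ⋂ i ∈ s, (fun ω : ∀ i, X i => ω i) ⁻¹' S i := by ext; simp [box]
      rw [this]
      exact s.measurableSet_biInter fun i _ => measurable_pi_apply i trivial

theorem RectContent.existsUnique [Countable I] [∀ i, Nonempty (X i)]
    {m : Set (∀ i, X i) → ℝ≥0∞} (hm : RectContent m) :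
    ∃! P : @Measure (∀ i, X i) (@MeasurableSpace.pi I X (fun _ => ⊤)),
      @IsProbabilityMeasure _ _ P ∧ ∀ A ∈ rects X, P A = m A := by
  let _ : ∀ i, MeasurableSpace (X i) := fun _ => ⊤
  have hgen : (MeasurableSpace.pi : MeasurableSpace (∀ i, X i)) = _ := pi_eq_generateFrom_rects
  have hP : ∀ A ∈ rects X,
      hm.content.measure isSetSemiring_rects hgen.le hm.sigmaSubadditive A = m A :=
    fun A hA => AddContent.measure_eq _ isSetSemiring_rects hgen hm.sigmaSubadditive hA
  refine ⟨_, ⟨⟨(hP _ univ_mem_rects).trans hm.map_univ⟩, hP⟩, ?_⟩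
  rintro Q ⟨hQ, hQm⟩
  refine ext_of_generate_finite (rects X) hgen (fun A hA B hB _ => inter_mem_rects hA hB)
    (fun A hA => (hQm A hA).trans (hP A hA).symm) ?_
  rw [hQm _ univ_mem_rects, hP _ univ_mem_rects]

end Rectangles

/-- A finitely additive, nonnegative set function on cylinder sets of a countable product
of countable sets, normalized to 1, and countably additive in each coordinate, extends
uniquely to a probability measure on the product σ-algebra (each coordinate discrete). -/
theorem stmt3 (I : Type) [Countable I] (Val : I → Set ℕ+)
    (hne : ∀ i, (Val i).Nonempty)
    (μ : Set (∀ i, Val i) → ℝ≥0∞)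
    (huniv : μ Set.univ = 1)
    (hadd : ∀ A B : Set (∀ i, Val i), IsCylinder A → IsCylinder B →
      IsCylinder (A ∪ B) → Disjoint A B → μ (A ∪ B) = μ A + μ B)
    (hcoord : ∀ i : I, ∑' v : Val i, μ {ω | ω i = v} = 1) :
    ∃! P : @Measure (∀ i, Val i) (@MeasurableSpace.pi I (fun i => Val i) (fun _ => ⊤)),
      @IsProbabilityMeasure _ _ P ∧ ∀ A : Set (∀ i, Val i), IsCylinder A → P A = μ A := by
  classical
  have : ∀ i, Nonempty (Val i) := fun i => (hne i).to_subtype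
  have huc : IsCylinder (Set.univ : Set (∀ i, Val i)) := ⟨∅, fun _ => Set.univ, by simp⟩
  -- If `∅` is a cylinder then additivity forces `μ ∅ = 0`; otherwise `μ ∅` is irrelevant.
  have hempty : IsCylinder (∅ : Set (∀ i, Val i)) → μ ∅ = 0 := fun h => by
    have h1 := hadd Set.univ ∅ huc h (by simpa using huc) (by simp)
    rw [Set.union_empty, huniv] at h1
    exact (ENNReal.add_right_inj ENNReal.one_ne_top).1 (by rw [← h1, add_zero])
  let m : Set (∀ i, Val i) → ℝ≥0∞ := fun A => if A = ∅ then 0 else μ A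
  have hmcyl : ∀ A, IsCylinder A → m A = μ A := fun A hA => by
    by_cases h : A = ∅
    · subst h; simp [m, hempty hA]
    · simp [m, h]
  have hcyl : ∀ A ∈ rects (fun i => Val i), A = ∅ ∨ IsCylinder A := fun A hA => hA
  have hm : RectContent m := by
    refine ⟨by simp [m], (hmcyl _ huc).trans huniv, fun A hA B hB hAB hd => ?_, fun i => ?_⟩
    · rcases hcyl A hA with rfl | hA'
      · simp [m]
      rcases hcyl B hB with rfl | hB'
      · simp [m]
      rcases hcyl _ hAB with h | hAB'
      · obtain ⟨rfl, rfl⟩ := Set.union_empty_iff.1 h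
        simp [m]
      rw [hmcyl _ hA', hmcyl _ hB', hmcyl _ hAB', hadd A B hA' hB' hAB' hd]
    · rw [← hcoord i]
      refine tsum_congr fun v => ?_
      have hne' : {ω : ∀ i, Val i | ω i = v} ≠ ∅ := Set.Nonempty.ne_empty
        ⟨Function.update (fun _ => Classical.arbitrary _) i v, by simp⟩
      simp [m, hne']
  have hiff : ∀ P : @Measure (∀ i, Val i) (@MeasurableSpace.pi I (fun i => Val i) (fun _ => ⊤)),
      (∀ A ∈ rects (fun i => Val i), P A = m A) ↔ ∀ A, IsCylinder A → P A = μ A := fun P => by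
    constructor
    · exact fun h A hA => (h A (Or.inr hA)).trans (hmcyl A hA)
    · intro h A hA
      rcases hcyl A hA with rfl | hA'
      · simp [m]
      · rw [h A hA', hmcyl A hA']
  simpa only [hiff] using hm.existsUnique
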